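/- arXiv:1802.03846 — 2 statements merged into one kernel-verified Lean document; each statement's English description precedes it below -/
import Mathlib

section
/- Let C → D and D → B be ring homomorphisms such that D → B is surjective with kernel I. Suppose B is an integral domain, the conormal module I/I² is a finitely generated free B-module, and the first homology H¹(L_{B/C}) of the (naive) cotangent complex of B over C is a torsion B-module. Then the Jacobi–Zariski sequence 0 → I/I² → B ⊗_D Ω¹_{D/C} → Ω¹_{B/C} → 0 is a short exact sequence; in particular the natural map I/I² → B ⊗_D Ω¹_{D/C} is injective. -/
open KaehlerDifferential TensorProduct

universe u

/-- If `H¹(L_{S/R})` is torsion, then so is `H¹` of the cotangent complex of any extension of `S`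
over `R`. -/
theorem Algebra.Extension.isTorsion_h1Cotangent {R S : Type*} [CommRing R] [CommRing S]
    [Algebra R S] (P : Algebra.Extension R S)
    (h : Module.IsTorsion S (Algebra.H1Cotangent R S)) :
    Module.IsTorsion S P.H1Cotangent := by
  intro x
  obtain ⟨y, rfl⟩ := Algebra.Extension.H1Cotangent.map_defaultHom_surjective P x
  obtain ⟨a, ha⟩ := @h y
  refine ⟨a, ?_⟩
  rw [Submonoid.smul_def] at ha ⊢
  rw [← map_smul, ha, map_zero]

/-- If `A → B` is surjective and `H¹(L_{B/R})` is torsion, then every element of the kernel of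
`I/I² → B ⊗[A] Ω[A⁄R]` is annihilated by an element of `A` whose image in `B` is a
non-zero-divisor. -/
theorem KaehlerDifferential.exists_smul_eq_zero_of_kerCotangentToTensor_eq_zero
    {R A B : Type*} [CommRing R] [CommRing A] [CommRing B] [Algebra R A] [Algebra A B]
    [Algebra R B] [IsScalarTower R A B] (hsurj : Function.Surjective (algebraMap A B))
    (h : Module.IsTorsion B (Algebra.H1Cotangent R B))
    {x : (RingHom.ker (algebraMap A B)).Cotangent} (hx : kerCotangentToTensor R A B x = 0) :
    ∃ a : A, algebraMap A B a ∈ nonZeroDivisors B ∧ a • x = 0 := by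
  let P : Algebra.Extension R B :=
    { Ring := A
      σ := Function.surjInv hsurj
      algebraMap_σ := Function.surjInv_eq hsurj }
  obtain ⟨b, hb⟩ := @Algebra.Extension.isTorsion_h1Cotangent _ _ _ _ _ P h ⟨.of x, hx⟩
  refine ⟨Function.surjInv hsurj b, ?_, congrArg Subtype.val hb⟩
  rw [Function.surjInv_eq hsurj]
  exact b.2

theorem statement_5 (C D B : Type u) [CommRing C] [CommRing D] [CommRing B]
    [Algebra C D] [Algebra D B] [Algebra C B] [IsScalarTower C D B]
    [IsDomain B]
    (hsurj : Function.Surjective (algebraMap D B))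
    (hfree :
      letI : Module B (RingHom.ker (algebraMap D B)).Cotangent :=
        Module.compHom _ ((RingHom.quotientKerEquivOfSurjective hsurj).symm.toRingHom)
      Module.Free B (RingHom.ker (algebraMap D B)).Cotangent ∧
        Module.Finite B (RingHom.ker (algebraMap D B)).Cotangent)
    (htors : Module.IsTorsion B (Algebra.H1Cotangent C B)) :
    Function.Injective (kerCotangentToTensor C D B) ∧
      Function.Exact (kerCotangentToTensor C D B) (mapBaseChange C D B) ∧
      Function.Surjective (mapBaseChange C D B) := by
  refine ⟨?_, exact_kerCotangentToTensor_mapBaseChange C D B hsurj,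
    mapBaseChange_surjective C D B hsurj⟩
  rw [injective_iff_map_eq_zero]
  intro x hx
  obtain ⟨d, hd, hdx⟩ := exists_smul_eq_zero_of_kerCotangentToTensor_eq_zero hsurj htors hx
  let _ : Module B (RingHom.ker (algebraMap D B)).Cotangent :=
    Module.compHom _ ((RingHom.quotientKerEquivOfSurjective hsurj).symm.toRingHom)
  have := hfree.1
  have hsmul : algebraMap D B d • x = d • x := by
    change (RingHom.quotientKerEquivOfSurjective hsurj).symm (algebraMap D B d) • x = d • x
    have : (RingHom.quotientKerEquivOfSurjective hsurj).symm (algebraMap D B d) =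
        Ideal.Quotient.mk _ d := by
      rw [RingEquiv.symm_apply_eq]
      rfl
    rw [this]
    rfl
  exact (smul_eq_zero.mp (hsmul.trans hdx)).resolve_left (nonZeroDivisors.ne_zero hd)
end

section
/- Let k be a field and let T be a connected scheme locally of finite type over k whose local rings are normal (integral domains integrally closed in their fields of fractions) and which admits a k-rational point t ∈ T(k). Then T is geometrically connected over k: for every field extension K of k, the base change T ×_{Spec k} Spec K is connected. -/
open AlgebraicGeometry CategoryTheory Limits

universe u

open scoped TensorProduct

/-- A nonzero element of a finitely generated domain over an algebraically closed field does not
vanish at some rational point. -/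
theorem exists_algHom_apply_ne_zero_of_isAlgClosed {k A : Type*} [Field k] [IsAlgClosed k]
    [CommRing A] [IsDomain A] [Algebra k A] [Algebra.FiniteType k A] {a : A} (ha : a ≠ 0) :
    ∃ φ : A →ₐ[k] k, φ a ≠ 0 := by
  have : IsDomain (Localization.Away a) :=
    IsLocalization.isDomain_localization (powers_le_nonZeroDivisors_of_noZeroDivisors ha)
  obtain ⟨m, hm⟩ := Ideal.exists_maximal (Localization.Away a)
  let := Ideal.Quotient.field m
  have : Module.Finite k (Localization.Away a ⧸ m) := finite_of_finite_type_of_isJacobsonRing _ _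
  let e : k ≃ₐ[k] (Localization.Away a ⧸ m) :=
    .ofBijective (Algebra.ofId _ _) IsAlgClosed.algebraMap_bijective_of_isIntegral
  refine ⟨(e.symm : _ →ₐ[k] k).comp ((Ideal.Quotient.mkₐ k m).comp
    (IsScalarTower.toAlgHom k A (Localization.Away a))), IsUnit.ne_zero ?_⟩
  exact (IsLocalization.Away.algebraMap_isUnit (S := Localization.Away a) a).map
    ((e.symm : _ →ₐ[k] k).comp (Ideal.Quotient.mkₐ k m))

/-- Evaluating the first factor of a tensor product at a rational point acts coordinatewise. -/
theorem Module.Basis.repr_lift_ofId_comp_apply {k A L ι : Type*} [Field k] [CommRing A] [Algebra k A] [CommRing L]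
    [Algebra k L] (b : Module.Basis ι k L) (φ : A →ₐ[k] k) (x : A ⊗[k] L) (i : ι) :
    b.repr (Algebra.TensorProduct.lift ((Algebra.ofId k L).comp φ) (AlgHom.id k L)
      (fun _ _ ↦ .all _ _) x) i = φ ((b.baseChange A).repr x i) := by
  induction x with
  | zero => simp
  | add x y hx hy => simp [hx, hy]
  | tmul a l => simp [Algebra.ofId_apply, ← Algebra.smul_def, mul_comm (φ a)]

theorem noZeroDivisors_tensorProduct_of_isAlgClosed_of_finiteType {k A L : Type*} [Field k]
    [IsAlgClosed k] [CommRing A] [IsDomain A] [Algebra k A] [Algebra.FiniteType k A]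
    [CommRing L] [IsDomain L] [Algebra k L] : NoZeroDivisors (A ⊗[k] L) where
  eq_zero_or_eq_zero_of_mul_eq_zero {x y} hxy := by
    by_contra! h
    let b := Module.Basis.ofVectorSpace k L
    have key {z : A ⊗[k] L} (hz : z ≠ 0) : ∃ i, (b.baseChange A).repr z i ≠ 0 := by
      by_contra! hrepr
      exact hz ((b.baseChange A).repr.map_eq_zero_iff.mp (Finsupp.ext hrepr))
    obtain ⟨i, hi⟩ := key h.1
    obtain ⟨j, hj⟩ := key h.2
    obtain ⟨φ, hφ⟩ := exists_algHom_apply_ne_zero_of_isAlgClosed (k := k) (mul_ne_zero hi hj)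
    rw [map_mul, ← b.repr_lift_ofId_comp_apply, ← b.repr_lift_ofId_comp_apply] at hφ
    have h0 := congrArg (Algebra.TensorProduct.lift ((Algebra.ofId k L).comp φ) (AlgHom.id k L)
      (fun _ _ ↦ .all _ _)) hxy
    rw [map_mul, map_zero, mul_eq_zero] at h0
    rcases h0 with h0 | h0 <;> simp [h0] at hφ

theorem Subalgebra.baseChange_le_baseChange {R A B : Type*} [CommRing R] [CommRing A] [CommRing B]
    [Algebra R A] [Algebra R B] {C D : Subalgebra R B} (h : C ≤ D) :
    C.baseChange A ≤ D.baseChange A := by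
  rintro _ ⟨x, rfl⟩
  refine ⟨Algebra.TensorProduct.map (AlgHom.id A A) (Subalgebra.inclusion h) x, ?_⟩
  induction x with
  | zero => simp
  | add x y hx hy => simp_all
  | tmul a c => simp

/-- Over an algebraically closed field, the tensor product of two domains is a domain. -/
theorem isDomain_tensorProduct_of_isAlgClosed {k L M : Type*} [Field k]
    [IsAlgClosed k] [CommRing L] [IsDomain L] [Algebra k L]
    [CommRing M] [IsDomain M] [Algebra k M] : IsDomain (L ⊗[k] M) := by
  have : NoZeroDivisors (L ⊗[k] M) := by
    refine ⟨fun {x y} hxy ↦ ?_⟩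
    obtain ⟨B, hB, hx⟩ := exists_fg_and_mem_baseChange x
    obtain ⟨C, hC, hy⟩ := exists_fg_and_mem_baseChange y
    obtain ⟨x, rfl⟩ := Subalgebra.baseChange_le_baseChange (le_sup_left (b := C)) hx
    obtain ⟨y, rfl⟩ := Subalgebra.baseChange_le_baseChange (le_sup_right (a := B)) hy
    have : Algebra.FiniteType k ↥(B ⊔ C) := (B ⊔ C).fg_iff_finiteType.mp (hB.sup hC)
    have := noZeroDivisors_tensorProduct_of_isAlgClosed_of_finiteType (k := k)
      (A := ↥(B ⊔ C)) (L := L)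
    have : NoZeroDivisors (L ⊗[k] ↥(B ⊔ C)) :=
      (Algebra.TensorProduct.comm k L ↥(B ⊔ C)).injective.noZeroDivisors _ (map_zero _) (map_mul _)
    have hinj : Function.Injective (Algebra.TensorProduct.map (AlgHom.id L L) (B ⊔ C).val) :=
      Module.Flat.lTensor_preserves_injective_linearMap _ Subtype.val_injective
    rw [AlgHom.toRingHom_eq_coe, RingHom.coe_coe, ← map_mul,
      map_eq_zero_iff _ hinj, mul_eq_zero] at hxy
    exact hxy.imp (by rintro rfl; simp) (by rintro rfl; simp)
  exact NoZeroDivisors.to_isDomain _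

theorem geometricallyConnected_Spec_map_of_isAlgClosed (k K : Type u) [Field k] [IsAlgClosed k]
    [Field K] [Algebra k K] :
    GeometricallyConnected (Spec.map (CommRingCat.ofHom (algebraMap k K))) := by
  refine ⟨geometrically_iff_of_commRing_of_isClosedUnderIsomorphisms.mpr fun L _ _ ↦ ?_⟩
  have : IsDomain (K ⊗[k] L) := isDomain_tensorProduct_of_isAlgClosed
  have : ConnectedSpace (Spec (.of (K ⊗[k] L))) := inferInstance
  exact (pullbackSpecIso k K L).hom.homeomorph.connectedSpace_iff.mpr this

/-- A connected scheme with a rational point stays connected after an algebraic extension of the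
base field: every nonempty clopen subset of the base change surjects onto the scheme, hence contains
the unique point above the rational point. -/
theorem connectedSpace_pullback_of_isAlgebraic {k : Type u} [Field k] {T : Scheme.{u}}
    (f : T ⟶ Spec (.of k)) [ConnectedSpace T] (t : Spec (.of k) ⟶ T) (ht : t ≫ f = 𝟙 _)
    (K : Type u) [Field K] [Algebra k K] [Algebra.IsAlgebraic k K] :
    ConnectedSpace ↥(pullback f (Spec.map (CommRingCat.ofHom (algebraMap k K)))) := by
  set g := Spec.map (CommRingCat.ofHom (algebraMap k K))
  have : IsIntegralHom g := by
    rw [IsIntegralHom.SpecMap_iff]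
    exact algebraMap_isIntegral_iff.mpr inferInstance
  let s : Spec (.of K) ⟶ pullback f g := pullback.lift (g ≫ t) (𝟙 _) (by simp [ht])
  have hs : IsPullback s g (pullback.fst f g) t := by
    refine .of_right (h₁₂ := pullback.snd f g) (h₂₂ := f) (v₁₃ := g) ?_
      (pullback.lift_fst _ _ _) (IsPullback.of_hasPullback f g).flip
    rw [pullback.lift_snd, ht]
    exact .of_id_fst
  have hmem {U : Set ↥(pullback f g)} (hU : IsClopen U) (hne : U.Nonempty) :
      s (IsLocalRing.closedPoint K) ∈ U := by
    have hc : IsClopen (pullback.fst f g '' U) :=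
      ⟨(pullback.fst f g).isClosedMap _ hU.1, (pullback.fst f g).isOpenMap _ hU.2⟩
    obtain ⟨u, hu, hut⟩ : t (IsLocalRing.closedPoint k) ∈ pullback.fst f g '' U := by
      rw [hc.eq_univ (hne.image _)]; trivial
    obtain ⟨z, rfl, -⟩ := Scheme.exists_preimage_of_isPullback hs _ _ hut
    rwa [Subsingleton.elim (IsLocalRing.closedPoint K) z]
  have : PreconnectedSpace ↥(pullback f g) := by
    refine preconnectedSpace_iff_clopen.mpr fun U hU ↦ ?_
    by_contra! h
    exact hmem hU.compl (Set.nonempty_compl.mpr h.2) (hmem hU h.1)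
  exact ⟨⟨s (IsLocalRing.closedPoint K)⟩⟩

theorem statement_9 (k : Type u) [Field k] (T : Scheme.{u})
    (fT : T ⟶ Spec (CommRingCat.of k)) [LocallyOfFiniteType fT]
    (hconn : ConnectedSpace T)
    (hnormal : ∀ t : T, IsDomain (T.presheaf.stalk t) ∧
      IsIntegrallyClosed (T.presheaf.stalk t))
    (t : Spec (CommRingCat.of k) ⟶ T) (ht : t ≫ fT = 𝟙 (Spec (CommRingCat.of k)))
    (K : Type u) [Field K] [Algebra k K] :
    ConnectedSpace ((pullback fT (Spec.map (CommRingCat.ofHom (algebraMap k K))) : Scheme.{u}) : Type u) := by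
  let φ : AlgebraicClosure k →ₐ[k] AlgebraicClosure K := IsAlgClosed.lift
  let : Algebra (AlgebraicClosure k) (AlgebraicClosure K) := φ.toAlgebra
  set g := Spec.map (CommRingCat.ofHom (algebraMap k K))
  let a := Spec.map (CommRingCat.ofHom (algebraMap k (AlgebraicClosure k)))
  let c := Spec.map (CommRingCat.ofHom (algebraMap K (AlgebraicClosure K)))
  let d := Spec.map (CommRingCat.ofHom (algebraMap (AlgebraicClosure k) (AlgebraicClosure K)))
  have hcomm : d ≫ a = c ≫ g := by
    simp only [a, c, d, g, ← Spec.map_comp, ← CommRingCat.ofHom_comp]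
    congr 2
    exact φ.comp_algebraMap
  have : ConnectedSpace ↥(pullback fT a) := connectedSpace_pullback_of_isAlgebraic fT t ht _
  have : GeometricallyConnected d := geometricallyConnected_Spec_map_of_isAlgClosed _ _
  have : ConnectedSpace ↥(pullback (pullback.snd fT a) d) := inferInstance
  let e : pullback (pullback.snd fT a) d ≅ pullback (pullback.snd fT g) c :=
    pullbackLeftPullbackSndIso fT a d ≪≫ pullback.congrHom rfl hcomm ≪≫
      (pullbackLeftPullbackSndIso fT g c).symm
  have : ConnectedSpace ↥(pullback (pullback.snd fT g) c) :=
    e.hom.homeomorph.connectedSpace_iff.mp this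
  have : Surjective c := inferInstance
  exact (pullback.fst (pullback.snd fT g) c).surjective.connectedSpace
    (pullback.fst (pullback.snd fT g) c).continuous
end
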